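/- Eigenvalue count differences via Prüfer angle differences: Let λ_0, λ_1 ∈ ℝ. For u, v solutions with Prüfer angles θ_u, θ_v write Δ_{u,v}(n) = θ_v(n) − θ_u(n). Then: (i) E_{(−∞,λ_1)}(J_1) − E_{(−∞,λ_0)}(J_0) = ⌈Δ_{s_{0,+}(λ_0),s_{1,−}(λ_1)}(N)/π⌉ − ⌈Δ_{s_{0,+}(λ_0),s_{1,−}(λ_1)}(0)/π⌉ = ⌊Δ_{s_{0,−}(λ_0),s_{1,+}(λ_1)}(N)/π⌋ − ⌊Δ_{s_{0,−}(λ_0),s_{1,+}(λ_1)}(0)/π⌋; (ii) E_{(−∞,λ_1)}(J_1) − E_{(−∞,λ_0]}(J_0) = ⌈Δ_{s_{0,±}(λ_0),s_{1,∓}(λ_1)}(N)/π⌉ − ⌊Δ_{s_{0,±}(λ_0),s_{1,∓}(λ_1)}(0)/π⌋ − 1 for both sign choices; (iii) E_{(−∞,λ_1]}(J_1) − E_{(−∞,λ_0)}(J_0) = ⌊Δ_{s_{0,±}(λ_0),s_{1,∓}(λ_1)}(N)/π⌋ − ⌈Δ_{s_{0,±}(λ_0),s_{1,∓}(λ_1)}(0)/π⌉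 + 1 for both sign choices; (iv) E_{(−∞,λ_1]}(J_1) − E_{(−∞,λ_0]}(J_0) = ⌈Δ_{s_{0,−}(λ_0),s_{1,+}(λ_1)}(N)/π⌉ − ⌈Δ_{s_{0,−}(λ_0),s_{1,+}(λ_1)}(0)/π⌉ = ⌊Δ_{s_{0,+}(λ_0),s_{1,−}(λ_1)}(N)/π⌋ − ⌊Δ_{s_{0,+}(λ_0),s_{1,−}(λ_1)}(0)/π⌋. -/

import Mathlib

/-!
Since `θ` vanishes at `0` for the minus solutions and at `N` for the plus solutions, every identity
splits into statements about one operator. With `E_<`, `E_≤` the numbers of eigenvalues of `J`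
below `λ`, resp. at most `λ`,
* `E_< = ⌈θ₋(N)/π⌉ - 1` and `E_≤ = ⌊θ₋(N)/π⌋` (`minus_count`),
* `E_< = -⌊θ₊(0)/π⌋ - 1` and `E_≤ = -⌈θ₊(0)/π⌉` (`plus_count`).

The ceiling of `θ/π` increases by one exactly at the nodes of the solution (`prufer_ceil_succ`), so
the first formula is the oscillation theorem: `E_<` is the number of nodes of `s₋(λ)` in
`{1, …, N-1}` (`jT_evCount`). This is proved by induction on the size of the matrix. `E_<` is the
largest dimension of a space on which `J - λ` is negative definite, the spectrum being simple.
Let `w` be the restriction of `s₋` to the index set of the larger matrix. It is orthogonal, for the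
form of `J - λ`, to the vectors supported on the index set of the smaller one, and its form has the
sign of `s₋(n) s₋(n+1)`, where `n` is the new index (`qf_add_sol`). If `s₋(n) ≠ 0`, then `w` is a
complementary direction and `E_<` grows by one iff this product is negative. If `s₋(n) = 0`, then
`λ` is an eigenvalue of the smaller matrix and not of the larger one, and interlacing gives one
additional eigenvalue below `λ`.

The formulas for `s₊` follow by reflecting the interval, and those for `E_≤` from the fact that `λ`
is an eigenvalue iff `s₋(N) = 0` (`jT_Iic`).
-/

open Real

noncomputable section

/-- The Jacobi difference expression `(τ u)(n) = a(n)u(n+1) + a(n-1)u(n-1) + b(n)u(n)`. -/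
def jTau (a b : ℤ → ℝ) (u : ℤ → ℝ) (n : ℤ) : ℝ :=
  a n * u (n + 1) + a (n - 1) * u (n - 1) + b n * u n

/-- `u` is a solution of `τ u = z u`: not identically zero and satisfying the recursion. -/
def IsJSolution (a b : ℤ → ℝ) (z : ℝ) (u : ℤ → ℝ) : Prop :=
  u ≠ 0 ∧ ∀ n : ℤ, jTau a b u n = z * u n

/-- The (N-1)×(N-1) Jacobi matrix with diagonal b(1),…,b(N-1) and
off-diagonal a(1),…,a(N-2). -/
def jMatrix (N : ℕ) (a b : ℤ → ℝ) : Matrix (Fin (N - 1)) (Fin (N - 1)) ℝ :=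
  fun i j =>
    if (i : ℕ) = (j : ℕ) then b (((i : ℕ) : ℤ) + 1)
    else if (i : ℕ) + 1 = (j : ℕ) then a (((i : ℕ) : ℤ) + 1)
    else if (j : ℕ) + 1 = (i : ℕ) then a (((j : ℕ) : ℤ) + 1)
    else 0

/-- `μ` is an eigenvalue of the matrix `J`. -/
def IsEV {m : ℕ} (J : Matrix (Fin m) (Fin m) ℝ) (μ : ℝ) : Prop :=
  ∃ v : Fin m → ℝ, v ≠ 0 ∧ J.mulVec v = μ • v

/-- The number of eigenvalues of `J` in `Ω`. -/
def evCount {m : ℕ} (J : Matrix (Fin m) (Fin m) ℝ) (Ω : Set ℝ) : ℕ :=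
  {μ ∈ Ω | IsEV J μ}.ncard

/-- The (modified) Wronskian `W_n(u₀,u₁) = u₀(n)a₁(n)u₁(n+1) - u₁(n)a₀(n)u₀(n+1)`. -/
def jW (a0 a1 : ℤ → ℝ) (u0 u1 : ℤ → ℝ) (n : ℤ) : ℝ :=
  u0 n * a1 n * u1 (n + 1) - u1 n * a0 n * u0 (n + 1)

open Classical in
/-- The weighted node sign `#_n(u₀,u₁) ∈ {-1,0,1}` of the Wronskian at `n`. -/
def jSgn (a0 a1 u0 u1 : ℤ → ℝ) (n : ℤ) : ℤ :=
  if jW a0 a1 u0 u1 (n + 1) * u0 (n + 1) * u1 (n + 1) > 0 ∧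
      (jW a0 a1 u0 u1 n * jW a0 a1 u0 u1 (n + 1) < 0 ∨
        (jW a0 a1 u0 u1 n = 0 ∧ jW a0 a1 u0 u1 (n + 1) ≠ 0)) then 1
  else if jW a0 a1 u0 u1 n * u0 (n + 1) * u1 (n + 1) > 0 ∧
      (jW a0 a1 u0 u1 n * jW a0 a1 u0 u1 (n + 1) < 0 ∨
        (jW a0 a1 u0 u1 n ≠ 0 ∧ jW a0 a1 u0 u1 (n + 1) = 0)) then -1
  else 0

/-- `#_{[m,n]}(u₀,u₁) = Σ_{j=m}^{n-1} #_j(u₀,u₁)`. -/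
def cntCC (a0 a1 u0 u1 : ℤ → ℝ) (m n : ℤ) : ℤ :=
  ∑ j ∈ Finset.Ico m n, jSgn a0 a1 u0 u1 j

open Classical in
/-- `#_{(m,n]}(u₀,u₁)`. -/
def cntOC (a0 a1 u0 u1 : ℤ → ℝ) (m n : ℤ) : ℤ :=
  cntCC a0 a1 u0 u1 m n - if jW a0 a1 u0 u1 m = 0 then 1 else 0

open Classical in
/-- `#_{[m,n)}(u₀,u₁)`. -/
def cntCO (a0 a1 u0 u1 : ℤ → ℝ) (m n : ℤ) : ℤ :=
  cntCC a0 a1 u0 u1 m n + if jW a0 a1 u0 u1 n = 0 then 1 else 0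

open Classical in
/-- `#_{(m,n)}(u₀,u₁)`. -/
def cntOO (a0 a1 u0 u1 : ℤ → ℝ) (m n : ℤ) : ℤ :=
  cntCC a0 a1 u0 u1 m n - (if jW a0 a1 u0 u1 m = 0 then 1 else 0)
    + (if jW a0 a1 u0 u1 n = 0 then 1 else 0)

/-- `n` is a node of `u`: `u(n) = 0` or `a(n)u(n)u(n+1) > 0`. -/
def IsNode (a u : ℤ → ℝ) (n : ℤ) : Prop :=
  u n = 0 ∨ a n * u n * u (n + 1) > 0

open Classical in
/-- The number of nodes of `u` between `m` and `l`: nodes `n` with `m < n < l`,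
plus one if `m` is a node with `u(m) ≠ 0`. -/
def nodeCount (a u : ℤ → ℝ) (m l : ℤ) : ℕ :=
  ((Finset.Ioo m l).filter (fun n => IsNode a u n)).card +
    if IsNode a u m ∧ u m ≠ 0 then 1 else 0

/-- `ρ, θ` are Prüfer variables for `u` (w.r.t. the coefficient `a`). -/
def IsPrufer (a u ρ θ : ℤ → ℝ) : Prop :=
  ∀ n : ℤ, 0 < ρ n ∧ u n = ρ n * Real.sin (θ n) ∧
    -(a n) * u (n + 1) = ρ n * Real.cos (θ n) ∧
    ⌈θ n / π⌉ ≤ ⌈θ (n + 1) / π⌉ ∧ ⌈θ (n + 1) / π⌉ ≤ ⌈θ n / π⌉ + 1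

/-! ### Prüfer angles and nodes -/

open Classical in
/-- `1` if `n` is a node of `u` (a zero of `u`, or a strict sign change between `n` and `n + 1`),
and `0` otherwise. Since `a < 0` this is the indicator of `IsNode a u n`. -/
def nodeInc (u : ℤ → ℝ) (n : ℤ) : ℕ :=
  if u n = 0 ∨ u n * u (n + 1) < 0 then 1 else 0

lemma sin_cos_of_even_ceil {x : ℝ} (h : Even ⌈x / π⌉) :
    sin x ≤ 0 ∧ (sin x = 0 → 0 < cos x) := by
  obtain ⟨r, hr⟩ := h
  obtain ⟨h1, h2⟩ := Int.ceil_eq_iff.1 hr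
  have hpi := pi_pos
  rw [lt_div_iff₀ hpi] at h1
  rw [div_le_iff₀ hpi] at h2
  push_cast at h1 h2
  have hs : sin (x - r * (2 * π)) = sin x := Real.sin_sub_int_mul_two_pi x r
  have hc : cos (x - r * (2 * π)) = cos x := Real.cos_sub_int_mul_two_pi x r
  rw [← hs, ← hc]
  set y := x - r * (2 * π) with hy
  have hy0 : y ≤ 0 := by rw [hy]; linarith
  have hy1 : -π < y := by rw [hy]; linarith
  refine ⟨sin_nonpos_of_nonpos_of_neg_pi_le hy0 hy1.le, fun h0 => ?_⟩
  rcases hy0.lt_or_eq with h | h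
  · exact absurd h0 (sin_neg_of_neg_of_neg_pi_lt h hy1).ne
  · rw [h, cos_zero]; exact one_pos

lemma sin_cos_of_odd_ceil {x : ℝ} (h : Odd ⌈x / π⌉) :
    0 ≤ sin x ∧ (sin x = 0 → cos x < 0) := by
  have hpi := pi_pos.ne'
  have h' : Even ⌈(x - π) / π⌉ := by
    have : (x - π) / π = x / π - 1 := by field_simp
    rw [this, Int.ceil_sub_one]
    exact h.sub_odd odd_one
  have := sin_cos_of_even_ceil h'
  rw [sin_sub_pi, cos_sub_pi] at this
  exact ⟨by linarith [this.1], fun h0 => by linarith [this.2 (by linarith)]⟩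

/-- The parity of `⌈θ(n)/π⌉` encodes the sign of `u(n)`, or that of `-u(n+1)` when `u(n) = 0`. -/
lemma prufer_sign {a u ρ θ : ℤ → ℝ} (ha : ∀ n, a n < 0) (hp : IsPrufer a u ρ θ) (n : ℤ) :
    (Even ⌈θ n / π⌉ ∧ u n ≤ 0 ∧ (u n = 0 → 0 < u (n + 1))) ∨
    (Odd ⌈θ n / π⌉ ∧ 0 ≤ u n ∧ (u n = 0 → u (n + 1) < 0)) := by
  obtain ⟨hρ, hs, hc, -, -⟩ := hp n
  have han := ha n
  have key : u n = 0 → sin (θ n) = 0 := fun h => by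
    rw [h] at hs; rcases mul_eq_zero.1 hs.symm with h | h
    · exact absurd h hρ.ne'
    · exact h
  rcases Int.even_or_odd ⌈θ n / π⌉ with h | h
  · obtain ⟨h1, h2⟩ := sin_cos_of_even_ceil h
    refine .inl ⟨h, by rw [hs]; exact mul_nonpos_of_nonneg_of_nonpos hρ.le h1, fun h0 => ?_⟩
    have := mul_pos hρ (h2 (key h0))
    rw [← hc] at this
    exact pos_of_mul_pos_right this (by linarith)
  · obtain ⟨h1, h2⟩ := sin_cos_of_odd_ceil h
    refine .inr ⟨h, by rw [hs]; exact mul_nonneg hρ.le h1, fun h0 => ?_⟩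
    have := mul_neg_of_pos_of_neg hρ (h2 (key h0))
    rw [← hc] at this
    exact neg_of_mul_neg_right this (by linarith)

/-- The Prüfer angle enters the next interval `(kπ, (k+1)π]` exactly when a node is crossed: the
normalization allows an increment `0` or `1`, and the parity given by `prufer_sign` decides which. -/
lemma prufer_ceil_succ {a b u ρ θ : ℤ → ℝ} {z : ℝ} (ha : ∀ n, a n < 0)
    (hu : ∀ n, jTau a b u n = z * u n) (hp : IsPrufer a u ρ θ) (n : ℤ) :
    ⌈θ (n + 1) / π⌉ = ⌈θ n / π⌉ + nodeInc u n := by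
  obtain ⟨-, -, -, h1, h2⟩ := hp n
  have hrec := hu (n + 1)
  simp only [jTau, add_sub_cancel_right] at hrec
  have e1 := prufer_sign ha hp n
  have e2 := prufer_sign ha hp (n + 1)
  have hn := ha n
  have hn1 := ha (n + 1)
  -- With `a < 0` this says that the two neighbours of a zero have opposite signs.
  have hz : u (n + 1) = 0 → a (n + 1) * u (n + 1 + 1) = - (a n * u n) := fun h => by
    rw [h] at hrec; linarith
  set k := ⌈θ n / π⌉
  set k' := ⌈θ (n + 1) / π⌉
  have hk : k' = k ∨ k' = k + 1 := by omega
  unfold nodeInc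
  split_ifs with hi
  · refine hk.resolve_left fun hkk => ?_
    rw [hkk] at e2
    rcases e1 with ⟨p1, q1, r1⟩ | ⟨p1, q1, r1⟩ <;> rcases e2 with ⟨p2, q2, r2⟩ | ⟨p2, q2, r2⟩
    · rcases hi with hi | hi
      · linarith [r1 hi]
      · nlinarith
    · exact (Int.not_even_iff_odd.2 p2) p1
    · exact (Int.not_even_iff_odd.2 p1) p2
    · rcases hi with hi | hi
      · linarith [r1 hi]
      · nlinarith
  · push Not at hi
    rw [Nat.cast_zero, add_zero]
    refine hk.resolve_right fun hkk => ?_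
    rw [hkk] at e2
    rcases e1 with ⟨p1, q1, r1⟩ | ⟨p1, q1, r1⟩ <;> rcases e2 with ⟨p2, q2, r2⟩ | ⟨p2, q2, r2⟩
    · exact (Int.not_even_iff_odd.2 p1.add_one) p2
    · have q1' := lt_of_le_of_ne q1 hi.1
      have : u (n + 1) = 0 := by nlinarith
      have := hz this
      have := r2 ‹_›
      nlinarith
    · have q1' := lt_of_le_of_ne q1 hi.1.symm
      have : u (n + 1) = 0 := by nlinarith
      have := hz this
      have := r2 ‹_›
      nlinarith
    · exact (Int.not_even_iff_odd.2 p2) p1.add_one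

lemma prufer_ceil_add {a b u ρ θ : ℤ → ℝ} {z : ℝ} (ha : ∀ n, a n < 0)
    (hu : ∀ n, jTau a b u n = z * u n) (hp : IsPrufer a u ρ θ) (m : ℕ) :
    ⌈θ m / π⌉ = ⌈θ 0 / π⌉ + ((∑ n ∈ Finset.range m, nodeInc u n : ℕ) : ℤ) := by
  induction m with
  | zero => simp
  | succ m ih =>
    rw [Finset.sum_range_succ]
    push_cast at ih ⊢
    rw [prufer_ceil_succ ha hu hp, ih, add_assoc]

lemma prufer_floor {a u ρ θ : ℤ → ℝ} (hp : IsPrufer a u ρ θ) (n : ℤ) [Decidable (u n = 0)] :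
    ⌊θ n / π⌋ = ⌈θ n / π⌉ - 1 + (if u n = 0 then 1 else 0) := by
  obtain ⟨hρ, hs, -⟩ := hp n
  have hpi := pi_pos
  split_ifs with h
  · rw [h] at hs
    have h0 : sin (θ n) = 0 := (mul_eq_zero.1 hs.symm).resolve_left hρ.ne'
    obtain ⟨k, hk⟩ := sin_eq_zero_iff.1 h0
    rw [← hk, mul_div_cancel_right₀ _ hpi.ne']
    simp
  · have hne : (⌈θ n / π⌉ : ℝ) ≠ θ n / π := fun hk => h <| by
      rw [hs, (eq_div_iff hpi.ne').1 hk |>.symm, sin_int_mul_pi, mul_zero]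
    rw [add_zero, Int.floor_eq_iff]
    have h1 := Int.le_ceil (θ n / π)
    have h2 := Int.ceil_lt_add_one (θ n / π)
    have h3 := lt_of_le_of_ne h1 hne.symm
    push_cast
    constructor <;> linarith

/-! ### Eigenvalue counts and the index of a quadratic form -/

open Matrix

/-- The quadratic form `x ↦ ⟨x, (A - z) x⟩`. -/
def qf {m : ℕ} (A : Matrix (Fin m) (Fin m) ℝ) (z : ℝ) (x : Fin m → ℝ) : ℝ :=
  x ⬝ᵥ (A *ᵥ x) - z * (x ⬝ᵥ x)

lemma qf_diag {m : ℕ} {A : Matrix (Fin m) (Fin m) ℝ} (hA : A.IsHermitian) :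
    ∃ C : (Fin m → ℝ) ≃ₗ[ℝ] (Fin m → ℝ), ∀ z x,
      qf A z x = ∑ i, (hA.eigenvalues i - z) * (C x i) ^ 2 := by
  set U : Matrix (Fin m) (Fin m) ℝ := (hA.eigenvectorUnitary).1 with hU
  have h1 : star U * U = 1 := Unitary.coe_star_mul_self hA.eigenvectorUnitary
  have h2 : U * star U = 1 := Unitary.coe_mul_star_self hA.eigenvectorUnitary
  have hstar : star U = Uᵀ := by
    ext i j; simp [Matrix.star_apply]
  rw [hstar] at h1 h2
  have hspec : A = U * diagonal hA.eigenvalues * Uᵀ := by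
    have := hA.spectral_theorem
    rw [Unitary.conjStarAlgAut_apply, ← hU, hstar] at this
    simpa [Function.comp_def] using this
  refine ⟨LinearEquiv.ofLinearMap (Matrix.toLin' Uᵀ) (Matrix.toLin' U) ?_ ?_, fun z x => ?_⟩
  · rw [← Matrix.toLin'_mul, h1, Matrix.toLin'_one]
  · rw [← Matrix.toLin'_mul, h2, Matrix.toLin'_one]
  have e1 : x ⬝ᵥ (A *ᵥ x) = (Uᵀ *ᵥ x) ⬝ᵥ (diagonal hA.eigenvalues *ᵥ (Uᵀ *ᵥ x)) := by
    conv_lhs => rw [hspec]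
    rw [← mulVec_mulVec, ← mulVec_mulVec, dotProduct_mulVec x U, ← mulVec_transpose]
  have e2 : x ⬝ᵥ x = (Uᵀ *ᵥ x) ⬝ᵥ (Uᵀ *ᵥ x) := by
    conv_rhs => rw [mulVec_transpose U x, ← dotProduct_mulVec, ← mulVec_transpose, mulVec_mulVec, h2,
      one_mulVec]
  rw [qf, e1, e2]
  simp only [dotProduct, mulVec_diagonal, Finset.mul_sum, ← Finset.sum_sub_distrib,
    LinearEquiv.coe_ofLinearMap, Matrix.toLin'_apply]
  exact Finset.sum_congr rfl fun i _ => by ring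

lemma isEV_iff {m : ℕ} {A : Matrix (Fin m) (Fin m) ℝ} (hA : A.IsHermitian) (μ : ℝ) :
    IsEV A μ ↔ ∃ i, hA.eigenvalues i = μ := by
  have : IsEV A μ ↔ μ ∈ spectrum ℝ A := by
    rw [← Matrix.spectrum_toLin', ← Module.End.hasEigenvalue_iff_mem_spectrum]
    constructor
    · rintro ⟨v, hv, h⟩
      exact Module.End.hasEigenvalue_of_hasEigenvector
        (Module.End.hasEigenvector_iff.2 ⟨Module.End.mem_eigenspace_iff.2 (by simpa using h), hv⟩)
    · intro h
      obtain ⟨v, hv⟩ := h.exists_hasEigenvector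
      exact ⟨v, hv.2, by simpa using hv.apply_eq_smul⟩
  rw [this, hA.spectrum_real_eq_range_eigenvalues, Set.mem_range]

/-- `evCount` counts distinct eigenvalues, so simplicity of the spectrum (`hinj`) is needed to
compare it with the indices of an eigenbasis. -/
lemma evCount_eq_card {m : ℕ} {A : Matrix (Fin m) (Fin m) ℝ} (hA : A.IsHermitian)
    (hinj : Function.Injective hA.eigenvalues) (Ω : Set ℝ) :
    evCount A Ω = Nat.card {i // hA.eigenvalues i ∈ Ω} := by
  have : {μ ∈ Ω | IsEV A μ} = hA.eigenvalues '' {i | hA.eigenvalues i ∈ Ω} := by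
    ext μ
    simp only [Set.mem_ofPred_eq, isEV_iff hA, Set.mem_image]
    constructor
    · rintro ⟨h, i, rfl⟩; exact ⟨i, h, rfl⟩
    · rintro ⟨i, h, rfl⟩; exact ⟨h, i, rfl⟩
  rw [evCount, this, Set.ncard_image_of_injective _ hinj]
  rfl

/-- If the coordinates (under `C`) of index in `Ω` determine the elements of `V`, then `dim V` is at
most the number of eigenvalues in `Ω`. -/
lemma finrank_le_evCount_aux {m : ℕ} {A : Matrix (Fin m) (Fin m) ℝ} (hA : A.IsHermitian)
    (hinj : Function.Injective hA.eigenvalues)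
    {V : Type*} [AddCommGroup V] [Module ℝ V]
    (C : (Fin m → ℝ) →ₗ[ℝ] (Fin m → ℝ)) (f : V →ₗ[ℝ] (Fin m → ℝ)) (Ω : Set ℝ)
    (h : ∀ x, (∀ i, hA.eigenvalues i ∈ Ω → C (f x) i = 0) → x = 0) :
    Module.finrank ℝ V ≤ evCount A Ω := by
  classical
  rw [evCount_eq_card hA hinj]
  let L : V →ₗ[ℝ] ({i // hA.eigenvalues i ∈ Ω} → ℝ) :=
    (LinearMap.funLeft ℝ ℝ (Subtype.val)) ∘ₗ C ∘ₗ f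
  have hL : Function.Injective L := by
    rw [injective_iff_map_eq_zero]
    intro x hx
    exact h x fun i hi => congrFun hx ⟨i, hi⟩
  have := LinearMap.finrank_le_finrank_of_injective hL
  rwa [Module.finrank_fintype_fun_eq_card, ← Nat.card_eq_fintype_card] at this

/-- A space on which `A - z` is negative definite has dimension at most the number of eigenvalues
below `z`. -/
lemma finrank_le_evCount_Iio {m : ℕ} {A : Matrix (Fin m) (Fin m) ℝ} (hA : A.IsHermitian)
    (hinj : Function.Injective hA.eigenvalues)
    {V : Type*} [AddCommGroup V] [Module ℝ V] (z : ℝ)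
    (f : V →ₗ[ℝ] (Fin m → ℝ)) (hf : ∀ x, x ≠ 0 → qf A z (f x) < 0) :
    Module.finrank ℝ V ≤ evCount A (Set.Iio z) := by
  obtain ⟨C, hC⟩ := qf_diag hA
  refine finrank_le_evCount_aux hA hinj C f _ fun x hx => ?_
  by_contra h0
  have := hf x h0
  rw [hC] at this
  refine this.not_ge (Finset.sum_nonneg fun i _ => ?_)
  by_cases hi : hA.eigenvalues i < z
  · have : C (f x) i = 0 := hx i hi
    simp [this]
  · exact mul_nonneg (by linarith) (sq_nonneg _)

/-- A space on which `A - z` is negative semidefinite has dimension at most the number of eigenvalues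
not exceeding `z`. Here, unlike in the definite case, injectivity of `f` is not automatic. -/
lemma finrank_le_evCount_Iic {m : ℕ} {A : Matrix (Fin m) (Fin m) ℝ} (hA : A.IsHermitian)
    (hinj : Function.Injective hA.eigenvalues)
    {V : Type*} [AddCommGroup V] [Module ℝ V] (z : ℝ)
    (f : V →ₗ[ℝ] (Fin m → ℝ)) (hfi : Function.Injective f) (hf : ∀ x, qf A z (f x) ≤ 0) :
    Module.finrank ℝ V ≤ evCount A (Set.Iic z) := by
  obtain ⟨C, hC⟩ := qf_diag hA
  refine finrank_le_evCount_aux hA hinj C f _ fun x hx => ?_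
  have h0 := hf x
  rw [hC] at h0
  have hnn : ∀ i ∈ Finset.univ, 0 ≤ (hA.eigenvalues i - z) * (C (f x) i) ^ 2 := fun i _ => by
    by_cases hi : hA.eigenvalues i ≤ z
    · have : C (f x) i = 0 := hx i hi
      simp [this]
    · exact mul_nonneg (by linarith) (sq_nonneg _)
  have h1 := (Finset.sum_eq_zero_iff_of_nonneg hnn).1 (le_antisymm h0 (Finset.sum_nonneg hnn))
  have h2 : C (f x) = 0 := by
    ext i
    by_cases hi : hA.eigenvalues i ≤ z
    · exact hx i hi
    · have := h1 i (Finset.mem_univ _)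
      rcases mul_eq_zero.1 this with h | h
      · exact absurd (by linarith) hi
      · exact pow_eq_zero_iff two_ne_zero |>.1 h
  exact hfi (by rw [map_zero]; exact C.map_eq_zero_iff.1 h2)

/-- The span of the eigenvectors with eigenvalue in `Ω`, parametrized by `ℝ^(evCount A Ω)`. -/
lemma exists_evCount_aux {m : ℕ} {A : Matrix (Fin m) (Fin m) ℝ} (hA : A.IsHermitian)
    (hinj : Function.Injective hA.eigenvalues)
    (C : (Fin m → ℝ) ≃ₗ[ℝ] (Fin m → ℝ)) (Ω : Set ℝ) :
    ∃ f : (Fin (evCount A Ω) → ℝ) →ₗ[ℝ] (Fin m → ℝ), Function.Injective f ∧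
      ∀ x i, hA.eigenvalues i ∉ Ω → C (f x) i = 0 := by
  classical
  have hcard : Fintype.card {i // hA.eigenvalues i ∈ Ω} = evCount A Ω := by
    rw [evCount_eq_card hA hinj, Nat.card_eq_fintype_card]
  let e := Fintype.equivFinOfCardEq hcard
  let g : (Fin (evCount A Ω) → ℝ) →ₗ[ℝ] (Fin m → ℝ) :=
    { toFun := fun x i => if h : hA.eigenvalues i ∈ Ω then x (e ⟨i, h⟩) else 0
      map_add' := fun x y => by ext i; by_cases h : hA.eigenvalues i ∈ Ω <;> simp [h]
      map_smul' := fun c x => by ext i; by_cases h : hA.eigenvalues i ∈ Ω <;> simp [h] }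
  have hg : Function.Injective g := by
    intro x y hxy
    ext k
    have := congrFun hxy (e.symm k).1
    simpa [g, (e.symm k).2] using this
  refine ⟨C.symm.toLinearMap ∘ₗ g, ?_, fun x i hi => ?_⟩
  · exact C.symm.injective.comp hg
  · simp [g, hi]

lemma exists_evCount_Iio {m : ℕ} {A : Matrix (Fin m) (Fin m) ℝ} (hA : A.IsHermitian)
    (hinj : Function.Injective hA.eigenvalues)
    (z : ℝ) :
    ∃ f : (Fin (evCount A (Set.Iio z)) → ℝ) →ₗ[ℝ] (Fin m → ℝ),
      ∀ x, x ≠ 0 → qf A z (f x) < 0 := by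
  obtain ⟨C, hC⟩ := qf_diag hA
  obtain ⟨f, hf, h⟩ := exists_evCount_aux hA hinj C (Set.Iio z)
  refine ⟨f, fun x hx => ?_⟩
  rw [hC]
  have hne : C (f x) ≠ 0 := by simpa using fun h => hx (hf (by simpa using h))
  obtain ⟨i, hi⟩ := Function.ne_iff.1 hne
  have hle : ∀ i ∈ Finset.univ, (hA.eigenvalues i - z) * (C (f x) i) ^ 2 ≤ 0 := fun i _ => by
    by_cases hi : hA.eigenvalues i < z
    · exact mul_nonpos_of_nonpos_of_nonneg (by linarith) (sq_nonneg _)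
    · simp [h x i hi]
  have hi' : hA.eigenvalues i < z := by
    by_contra h'; exact hi (h x i h')
  refine Finset.sum_neg' hle ⟨i, Finset.mem_univ _, ?_⟩
  exact mul_neg_of_neg_of_pos (by linarith) (sq_pos_of_ne_zero hi)

lemma exists_evCount_Iic {m : ℕ} {A : Matrix (Fin m) (Fin m) ℝ} (hA : A.IsHermitian)
    (hinj : Function.Injective hA.eigenvalues)
    (z : ℝ) :
    ∃ f : (Fin (evCount A (Set.Iic z)) → ℝ) →ₗ[ℝ] (Fin m → ℝ), Function.Injective f ∧
      ∀ x, qf A z (f x) ≤ 0 := by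
  obtain ⟨C, hC⟩ := qf_diag hA
  obtain ⟨f, hf, h⟩ := exists_evCount_aux hA hinj C (Set.Iic z)
  refine ⟨f, hf, fun x => ?_⟩
  rw [hC]
  refine Finset.sum_nonpos fun i _ => ?_
  by_cases hi : hA.eigenvalues i ≤ z
  · exact mul_nonpos_of_nonpos_of_nonneg (by linarith) (sq_nonneg _)
  · simp [h x i hi]

/-! ### The Jacobi matrix -/

/-- The `m × m` Jacobi matrix `jMatrix (m + 1)`, with the index type `Fin m` instead of
`Fin (m + 1 - 1)`. -/
def jT (m : ℕ) (a b : ℤ → ℝ) : Matrix (Fin m) (Fin m) ℝ := jMatrix (m + 1) a b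

lemma jT_symm (m : ℕ) (a b : ℤ → ℝ) : (jT m a b)ᵀ = jT m a b := by
  ext i j
  simp only [Matrix.transpose_apply, jT, jMatrix]
  split_ifs <;> first | rfl | omega | (congr 2; omega)

lemma jT_herm (m : ℕ) (a b : ℤ → ℝ) : (jT m a b).IsHermitian := by
  rw [Matrix.IsHermitian, Matrix.conjTranspose_eq_transpose_of_trivial, jT_symm]

/-- The Jacobi matrix acts on the restriction of `u` to `{1, …, m}` like `τ`, up to the two boundary
terms. -/
lemma jT_mulVec (m : ℕ) (a b u : ℤ → ℝ) (i : Fin m) :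
    (jT m a b *ᵥ fun j : Fin m => u ((j : ℕ) + 1)) i =
      jTau a b u ((i : ℕ) + 1) - (if (i : ℕ) = 0 then a 0 * u 0 else 0)
        - (if (i : ℕ) + 1 = m then a m * u (m + 1) else 0) := by
  obtain ⟨i, hi⟩ := i
  let g : ℕ → ℝ := fun j => (if i = j then b (i + 1) * u (i + 1) else 0)
    + (if i + 1 = j then a (i + 1) * u (i + 1 + 1) else 0)
    + (if j + 1 = i then a i * u i else 0)
  have h1 : (jT m a b *ᵥ fun j : Fin m => u ((j : ℕ) + 1)) ⟨i, hi⟩ = ∑ j : Fin m, g j := by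
    rw [Matrix.mulVec, dotProduct]
    refine Finset.sum_congr rfl fun j _ => ?_
    simp only [jT, jMatrix, g]
    by_cases e1 : i = (j : ℕ)
    · simp [e1]
    by_cases e2 : i + 1 = (j : ℕ)
    · have e3 : i + 1 + 1 ≠ i := by omega
      simp [e3, ← e2]
    by_cases e3 : (j : ℕ) + 1 = i
    · have e4 : (j : ℕ) + 1 + 1 ≠ j := by omega
      simp [e4, ← e3]
    · simp [e1, e2, e3]
  rw [h1, Fin.sum_univ_eq_sum_range g, Finset.sum_add_distrib, Finset.sum_add_distrib,
    Finset.sum_ite_eq, Finset.sum_ite_eq]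
  have h2 : ∑ j ∈ Finset.range m, (if j + 1 = i then a i * u i else 0) =
      if i = 0 then 0 else a i * u i := by
    cases i with
    | zero => simp
    | succ i =>
      have : i < m := by omega
      simp [this]
  rw [h2]
  simp only [jTau, Finset.mem_range, hi, if_true, add_sub_cancel_right]
  by_cases hm : i + 1 = m
  · subst hm
    by_cases h0 : i = 0
    · subst h0; simp; ring
    · simp [h0]; ring
  · have : i + 1 < m := by omega
    by_cases h0 : i = 0
    · subst h0; simp [this, hm]; ring
    · simp [h0, this, hm]; ring

lemma jT_mulVec_sol {a b u : ℤ → ℝ} {z : ℝ} (hu : ∀ n, jTau a b u n = z * u n) (h0 : u 0 = 0)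
    (m : ℕ) (i : Fin m) :
    (jT m a b *ᵥ fun j : Fin m => u ((j : ℕ) + 1)) i =
      z * u ((i : ℕ) + 1) - (if (i : ℕ) + 1 = m then a m * u (m + 1) else 0) := by
  rw [jT_mulVec, hu, h0]; simp

/-- Two solutions on `{1, …, m}` vanishing at `0` are proportional. -/
lemma sol_prop {a b u v : ℤ → ℝ} {z : ℝ} {m : ℕ} (ha : ∀ n, a n < 0)
    (hu : ∀ i : ℕ, i < m → jTau a b u (i + 1) = z * u (i + 1))
    (hv : ∀ i : ℕ, i < m → jTau a b v (i + 1) = z * v (i + 1))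
    (hu0 : u 0 = 0) (hv0 : v 0 = 0) (k : ℕ) (hk : k ≤ m) :
    u 1 * v k = v 1 * u k ∧ u 1 * v (k + 1) = v 1 * u (k + 1) := by
  induction k with
  | zero => simp [hu0, hv0, mul_comm]
  | succ k ih =>
    obtain ⟨i1, i2⟩ := ih (by omega)
    have e1 := hu k (by omega)
    have e2 := hv k (by omega)
    simp only [jTau, add_sub_cancel_right] at e1 e2
    push_cast
    refine ⟨i2, mul_left_cancel₀ (ha (k + 1)).ne ?_⟩
    linear_combination u 1 * e2 - v 1 * e1 - a k * i1 - (b (k + 1) - z) * i2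

/-- The extension by zero of a vector on `{1, …, m}` to `ℤ`; the entry at `k` is `v (k - 1)`. -/
def zext {m : ℕ} (v : Fin m → ℝ) (k : ℤ) : ℝ :=
  if h : 1 ≤ k ∧ k ≤ m then v ⟨(k - 1).toNat, by omega⟩ else 0

lemma zext_succ {m : ℕ} (v : Fin m → ℝ) (i : Fin m) : zext v ((i : ℕ) + 1) = v i := by
  have : (1 : ℤ) ≤ (i : ℕ) + 1 ∧ ((i : ℕ) : ℤ) + 1 ≤ m := by omega
  simp [zext, this]

lemma zext_rec {a b : ℤ → ℝ} {z : ℝ} {m : ℕ} {v : Fin m → ℝ} (h : jT m a b *ᵥ v = z • v)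
    (i : ℕ) (hi : i < m) : jTau a b (zext v) (i + 1) = z * zext v (i + 1) := by
  have e := jT_mulVec m a b (zext v) ⟨i, hi⟩
  have hv : (fun j : Fin m => zext v ((j : ℕ) + 1)) = v := funext fun j => zext_succ v j
  have h0 : zext v 0 = 0 := by simp [zext]
  have hm : zext v (m + 1) = 0 := by simp [zext]
  rw [hv, h, h0, hm] at e
  simp only [mul_zero, ite_self, sub_zero, Pi.smul_apply, smul_eq_mul] at e
  rw [← e, ← zext_succ v ⟨i, hi⟩]

/-- An eigenvector of a Jacobi matrix has nonzero first entry. -/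
lemma jT_evec_one_ne {a b : ℤ → ℝ} {z : ℝ} {m : ℕ} {v : Fin m → ℝ} (ha : ∀ n, a n < 0)
    (h : jT m a b *ᵥ v = z • v) (hv : v ≠ 0) : zext v 1 ≠ 0 := by
  intro h1
  have hk : ∀ k : ℕ, k ≤ m → zext v k = 0 ∧ zext v (k + 1) = 0 := by
    intro k
    induction k with
    | zero => intro _; simpa [h1] using (by simp [zext] : zext v 0 = 0)
    | succ k ih =>
      intro hk
      obtain ⟨i1, i2⟩ := ih (by omega)
      have e := zext_rec h k (by omega)
      simp only [jTau, add_sub_cancel_right, i1, i2, mul_zero, add_zero] at e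
      push_cast
      exact ⟨i2, (mul_eq_zero.1 e).resolve_left (ha _).ne⟩
  refine hv (funext fun i => ?_)
  rw [← zext_succ v i]
  exact (hk i (by omega)).2

/-- The spectrum of a Jacobi matrix is simple. -/
lemma jT_inj {a b : ℤ → ℝ} (ha : ∀ n, a n < 0) (m : ℕ) :
    Function.Injective (jT_herm m a b).eigenvalues := by
  intro i j hij
  by_contra hne
  set B := (jT_herm m a b).eigenvectorBasis
  set z := (jT_herm m a b).eigenvalues j
  have ei : jT m a b *ᵥ (B i) = z • (B i : Fin m → ℝ) := by
    rw [← hij]; exact (jT_herm m a b).mulVec_eigenvectorBasis i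
  have ej : jT m a b *ᵥ (B j) = z • (B j : Fin m → ℝ) :=
    (jT_herm m a b).mulVec_eigenvectorBasis j
  have hli := B.orthonormal.linearIndependent
  have nj : (B j : Fin m → ℝ) ≠ 0 := fun h => hli.ne_zero j (by ext k; simpa using congrFun h k)
  have cj := jT_evec_one_ne ha ej nj
  have hpr : (zext (B i : Fin m → ℝ) 1) • B j = (zext (B j : Fin m → ℝ) 1) • B i := by
    ext k
    have := (sol_prop ha (zext_rec ei) (zext_rec ej) (by simp [zext]) (by simp [zext]) k
      (by omega)).2
    rw [zext_succ, zext_succ] at this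
    simpa using this
  have h2 := congrArg (fun x => inner ℝ (B i) x) hpr
  simp only [inner_smul_right, B.orthonormal.2 hne, mul_zero, inner_self_eq_norm_sq_to_K,
    B.orthonormal.1 i] at h2
  exact cj (by simpa using h2.symm)

lemma jT_isEV_iff {a b u : ℤ → ℝ} {z : ℝ} (ha : ∀ n, a n < 0)
    (hu : ∀ n, jTau a b u n = z * u n) (h0 : u 0 = 0) (h1 : u 1 ≠ 0) (m : ℕ) :
    IsEV (jT m a b) z ↔ u (m + 1) = 0 := by
  constructor
  · rintro ⟨v, hv, h⟩
    have := (sol_prop ha (fun i _ => hu (i + 1)) (zext_rec h) h0 (by simp [zext]) m le_rfl).2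
    rw [show zext v (m + 1) = 0 by simp [zext], mul_zero] at this
    exact (mul_eq_zero.1 this.symm).resolve_left (jT_evec_one_ne ha h hv)
  · intro hm
    cases m with
    | zero => simp [h1] at hm
    | succ m =>
      refine ⟨fun j => u ((j : ℕ) + 1), fun h => h1 ?_, funext fun i => ?_⟩
      · simpa using congrFun h 0
      · rw [jT_mulVec_sol hu h0, hm]; simp

lemma jT_Iic {a b u : ℤ → ℝ} {z : ℝ} (ha : ∀ n, a n < 0)
    (hu : ∀ n, jTau a b u n = z * u n) (h0 : u 0 = 0) (h1 : u 1 ≠ 0) (m : ℕ)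
    [Decidable (u (m + 1) = 0)] :
    evCount (jT m a b) (Set.Iic z) =
      evCount (jT m a b) (Set.Iio z) + if u (m + 1) = 0 then 1 else 0 := by
  have hfin : {μ ∈ Set.Iio z | IsEV (jT m a b) μ}.Finite := by
    refine (Set.finite_range (jT_herm m a b).eigenvalues).subset fun μ hμ => ?_
    exact (isEV_iff (jT_herm m a b) μ).1 hμ.2
  have hiff := jT_isEV_iff ha hu h0 h1 m
  unfold evCount
  split_ifs with h
  · rw [← Set.ncard_insert_of_notMem (a := z) _ hfin]
    · congr 1
      ext μ
      simp only [Set.mem_ofPred_eq, Set.mem_Iic, Set.mem_insert_iff, Set.mem_Iio]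
      constructor
      · rintro ⟨h1, h2⟩
        rcases h1.lt_or_eq with h3 | h3
        · exact .inr ⟨h3, h2⟩
        · exact .inl h3
      · rintro (rfl | ⟨h1, h2⟩)
        · exact ⟨le_rfl, hiff.2 h⟩
        · exact ⟨h1.le, h2⟩
    · simp
  · congr 1
    ext μ
    simp only [Set.mem_ofPred_eq, Set.mem_Iic, Set.mem_Iio]
    refine and_congr_left fun h2 => ⟨fun h3 => lt_of_le_of_ne h3 ?_, le_of_lt⟩
    rintro rfl
    exact h (hiff.1 h2)

/-! ### Adding one row and column -/

/-- The inclusion `ℝ^m → ℝ^(m+1)` appending a zero entry. -/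
def padL (m : ℕ) : (Fin m → ℝ) →ₗ[ℝ] (Fin (m + 1) → ℝ) where
  toFun v := Fin.snoc (α := fun _ => ℝ) v 0
  map_add' x y := by ext i; refine Fin.lastCases ?_ (fun i => ?_) i <;> simp
  map_smul' c x := by ext i; refine Fin.lastCases ?_ (fun i => ?_) i <;> simp

/-- The projection `ℝ^(m+1) → ℝ^m` forgetting the last entry. -/
def initL (m : ℕ) : (Fin (m + 1) → ℝ) →ₗ[ℝ] (Fin m → ℝ) := LinearMap.funLeft ℝ ℝ Fin.castSucc

lemma padL_inj (m : ℕ) : Function.Injective (padL m) := fun x y h => by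
  ext i; simpa [padL] using congrFun h i.castSucc

lemma padL_last {m : ℕ} (x : Fin m → ℝ) : padL m x (Fin.last m) = 0 := by simp [padL]

lemma padL_initL {m : ℕ} {x : Fin (m + 1) → ℝ} (h : x (Fin.last m) = 0) :
    padL m (initL m x) = x := by
  ext i
  refine Fin.lastCases ?_ (fun i => ?_) i <;> simp [padL, initL, LinearMap.funLeft, h]

lemma qf_padL {m : ℕ} (a b : ℤ → ℝ) (z : ℝ) (x : Fin m → ℝ) :
    qf (jT (m + 1) a b) z (padL m x) = qf (jT m a b) z x := by
  simp [qf, dotProduct, mulVec, Fin.sum_univ_castSucc, padL, jT, jMatrix]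

/-- The restriction `w` of the solution `u` satisfies `(J - z) w = -a(m+1) u(m+2) e_last`. Hence `w` is
orthogonal, for the form of `J - z`, to all vectors with vanishing last entry. -/
lemma qf_add_sol {a b u : ℤ → ℝ} {z : ℝ} (hu : ∀ n, jTau a b u n = z * u n) (h0 : u 0 = 0)
    (m : ℕ) (x : Fin (m + 1) → ℝ) (t : ℝ) :
    qf (jT (m + 1) a b) z (x + t • fun j : Fin (m + 1) => u ((j : ℕ) + 1)) =
      qf (jT (m + 1) a b) z x
        - a (m + 1) * u (m + 2) * (2 * t * x (Fin.last m) + t ^ 2 * u (m + 1)) := by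
  set w : Fin (m + 1) → ℝ := fun j => u ((j : ℕ) + 1) with hw
  have hA : jT (m + 1) a b *ᵥ w
      = z • w - (a (m + 1) * u (m + 2)) • Pi.single (Fin.last m) 1 := by
    ext i
    rw [hw, jT_mulVec_sol hu h0]
    refine Fin.lastCases ?_ (fun i => ?_) i
    · simp; left; ring_nf
    · have : (i : ℕ) ≠ m := i.2.ne
      simp [this]
  have hsym : w ⬝ᵥ (jT (m + 1) a b *ᵥ x) = x ⬝ᵥ (jT (m + 1) a b *ᵥ w) := by
    rw [dotProduct_mulVec, ← mulVec_transpose, jT_symm, dotProduct_comm]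
  have hwl : w (Fin.last m) = u (m + 1) := by simp [hw]
  simp only [qf, mulVec_add, mulVec_smul, dotProduct_add, add_dotProduct, smul_dotProduct,
    dotProduct_smul, hsym, hA, dotProduct_sub, dotProduct_single, smul_eq_mul, hwl,
    dotProduct_comm w x, Pi.add_apply, Pi.smul_apply]
  ring

/-- One half of Cauchy interlacing: on a negative definite space for the larger matrix, the last entry
vanishes on a subspace of codimension at most one. -/
lemma jT_succ_le {a b : ℤ → ℝ} (ha : ∀ n, a n < 0) (z : ℝ) (m : ℕ) :
    evCount (jT (m + 1) a b) (Set.Iio z) ≤ evCount (jT m a b) (Set.Iio z) + 1 := by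
  obtain ⟨f, hf⟩ := exists_evCount_Iio (jT_herm (m + 1) a b) (jT_inj ha (m + 1)) z
  let l : (Fin (evCount (jT (m + 1) a b) (Set.Iio z)) → ℝ) →ₗ[ℝ] ℝ :=
    (LinearMap.proj (Fin.last m)) ∘ₗ f
  have hk := finrank_le_evCount_Iio (jT_herm m a b) (jT_inj ha m) z
    (initL m ∘ₗ f ∘ₗ (LinearMap.ker l).subtype) (fun x hx => by
      rw [← qf_padL]
      simp only [LinearMap.comp_apply]
      rw [padL_initL (x := f (l.ker.subtype x)) (LinearMap.mem_ker.1 x.2)]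
      exact hf _ (by simpa using hx))
  have hr := l.finrank_range_add_finrank_ker
  have hr' := Submodule.finrank_le (LinearMap.range l)
  simp only [Module.finrank_self, Module.finrank_fintype_fun_eq_card, Fintype.card_fin] at hr hr'
  omega

/-- When `u(m+1) = 0`, `z` is an eigenvalue of the smaller matrix but not of the larger one, so
counting eigenvalues `≤ z` gives the extra eigenvalue. -/
lemma jT_step_zero {a b u : ℤ → ℝ} {z : ℝ} (ha : ∀ n, a n < 0)
    (hu : ∀ n, jTau a b u n = z * u n) (h0 : u 0 = 0) (h1 : u 1 ≠ 0) (m : ℕ)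
    (hm : u (m + 1) = 0) (hm' : u (m + 2) ≠ 0) :
    evCount (jT (m + 1) a b) (Set.Iio z) = evCount (jT m a b) (Set.Iio z) + 1 := by
  classical
  apply le_antisymm
  · exact jT_succ_le ha z m
  · obtain ⟨f, hfi, hf⟩ := exists_evCount_Iic (jT_herm m a b) (jT_inj ha m) z
    have hk := finrank_le_evCount_Iic (jT_herm (m + 1) a b) (jT_inj ha (m + 1)) z
      (padL m ∘ₗ f) ((padL_inj m).comp hfi) (fun x => by simpa [qf_padL] using hf x)
    have e1 := jT_Iic ha hu h0 h1 m
    have e2 := jT_Iic ha hu h0 h1 (m + 1)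
    have hm'' : u (((m + 1 : ℕ) : ℤ) + 1) ≠ 0 := by
      convert hm' using 2; push_cast; ring
    rw [if_pos hm] at e1
    rw [if_neg hm''] at e2
    simp only [Module.finrank_fintype_fun_eq_card, Fintype.card_fin] at hk
    omega

lemma jT_mono {a b : ℤ → ℝ} (ha : ∀ n, a n < 0) (z : ℝ) (m : ℕ) :
    evCount (jT m a b) (Set.Iio z) ≤ evCount (jT (m + 1) a b) (Set.Iio z) := by
  obtain ⟨f, hf⟩ := exists_evCount_Iio (jT_herm m a b) (jT_inj ha m) z
  have hk := finrank_le_evCount_Iio (jT_herm (m + 1) a b) (jT_inj ha (m + 1)) z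
    (padL m ∘ₗ f) (fun x hx => by simpa [qf_padL] using hf x hx)
  simpa using hk

/-- At a sign change the restricted solution adds an orthogonal negative direction. -/
lemma jT_step_neg {a b u : ℤ → ℝ} {z : ℝ} (ha : ∀ n, a n < 0)
    (hu : ∀ n, jTau a b u n = z * u n) (h0 : u 0 = 0) (m : ℕ)
    (hm : u (m + 1) * u (m + 2) < 0) :
    evCount (jT m a b) (Set.Iio z) + 1 ≤ evCount (jT (m + 1) a b) (Set.Iio z) := by
  obtain ⟨f, hf⟩ := exists_evCount_Iio (jT_herm m a b) (jT_inj ha m) z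
  let w : Fin (m + 1) → ℝ := fun j => u ((j : ℕ) + 1)
  have hk := finrank_le_evCount_Iio (jT_herm (m + 1) a b) (jT_inj ha (m + 1)) z
    (LinearMap.coprod (padL m ∘ₗ f) (LinearMap.toSpanSingleton ℝ _ w)) (fun p hp => by
      obtain ⟨x, t⟩ := p
      simp only [LinearMap.coprod_apply, LinearMap.comp_apply, LinearMap.toSpanSingleton_apply]
      rw [qf_add_sol hu h0, qf_padL, padL_last]
      have hc : 0 < a (m + 1) * (u (m + 1) * u (m + 2)) := mul_pos_of_neg_of_neg (ha _) hm
      by_cases hx : x = 0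
      · have ht : t ≠ 0 := by rintro rfl; exact hp (by simp [hx])
        have ht2 : 0 < t ^ 2 := by positivity
        have hq : qf (jT m a b) z (f x) = 0 := by simp [hx, qf]
        rw [hq]
        nlinarith [mul_pos hc ht2]
      · nlinarith [hf x hx, mul_nonneg hc.le (sq_nonneg t)])
  simpa using hk

/-- Without a node, the restricted solution `w` has nonnegative form and nonzero last entry; projecting
along `w` onto the vectors with zero last entry only decreases the form. -/
lemma jT_step_nonneg {a b u : ℤ → ℝ} {z : ℝ} (ha : ∀ n, a n < 0)
    (hu : ∀ n, jTau a b u n = z * u n) (h0 : u 0 = 0) (m : ℕ) (hne : u (m + 1) ≠ 0)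
    (hm : 0 ≤ u (m + 1) * u (m + 2)) :
    evCount (jT (m + 1) a b) (Set.Iio z) ≤ evCount (jT m a b) (Set.Iio z) := by
  obtain ⟨f, hf⟩ := exists_evCount_Iio (jT_herm (m + 1) a b) (jT_inj ha (m + 1)) z
  let w : Fin (m + 1) → ℝ := fun j => u ((j : ℕ) + 1)
  have hwl : w (Fin.last m) = u (m + 1) := by simp [w]
  let l : (Fin (m + 1) → ℝ) →ₗ[ℝ] ℝ := (u (m + 1))⁻¹ • LinearMap.proj (Fin.last m)
  let P : (Fin (m + 1) → ℝ) →ₗ[ℝ] (Fin (m + 1) → ℝ) :=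
    LinearMap.id - (LinearMap.toSpanSingleton ℝ _ w) ∘ₗ l
  have hPl : ∀ y, P y (Fin.last m) = 0 := fun y => by
    simp [P, l, hwl]; field_simp; simp
  have hPy : ∀ y, y = P y + l y • w := fun y => by simp [P]
  have hk := finrank_le_evCount_Iio (jT_herm m a b) (jT_inj ha m) z
    (initL m ∘ₗ P ∘ₗ f) (fun x hx => by
      simp only [LinearMap.comp_apply]
      rw [← qf_padL, padL_initL (hPl _)]
      have h := hf x hx
      rw [hPy (f x), qf_add_sol hu h0, hPl] at h
      have hc : a (m + 1) * (u (m + 1) * u (m + 2)) ≤ 0 :=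
        mul_nonpos_of_nonpos_of_nonneg (ha _).le hm
      nlinarith [mul_nonneg (neg_nonneg.2 hc) (sq_nonneg (l (f x)))])
  simpa using hk

lemma sol_no_double_zero {a b u : ℤ → ℝ} {z : ℝ} (ha : ∀ n, a n < 0)
    (hu : ∀ n, jTau a b u n = z * u n) (h1 : u 1 ≠ 0) (m : ℕ)
    (hm : u (m + 1) = 0) : u (m + 2) ≠ 0 := by
  induction m with
  | zero => simp [h1] at hm
  | succ m ih =>
    intro h
    have e := hu (m + 2)
    push_cast at hm h
    rw [jTau, show (m : ℤ) + 2 + 1 = m + 1 + 2 by ring, h, show (m : ℤ) + 2 - 1 = m + 1 by ring,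
      show (m : ℤ) + 2 = m + 1 + 1 by ring, hm] at e
    have h3 : u (m + 1) = 0 := by
      have : a (m + 1) * u (m + 1) = 0 := by linarith
      exact (mul_eq_zero.1 this).resolve_left (ha _).ne
    exact ih h3 (by rw [show (m : ℤ) + 2 = m + 1 + 1 by ring]; exact hm)

/-- Sturm oscillation: the number of eigenvalues below `z` is the number of nodes of the solution
starting from `u(0) = 0`. -/
lemma jT_evCount {a b u : ℤ → ℝ} {z : ℝ} (ha : ∀ n, a n < 0)
    (hu : ∀ n, jTau a b u n = z * u n) (h0 : u 0 = 0) (h1 : u 1 ≠ 0) (m : ℕ) :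
    evCount (jT m a b) (Set.Iio z) = ∑ n ∈ Finset.range m, nodeInc u (n + 1) := by
  induction m with
  | zero =>
    have : {μ ∈ Set.Iio z | IsEV (jT 0 a b) μ} = ∅ := by
      ext μ
      simp only [Set.mem_ofPred_eq, Set.mem_empty_iff_false, iff_false, not_and]
      rintro - ⟨v, hv, -⟩
      exact hv (Subsingleton.elim _ _)
    rw [evCount, this]; simp
  | succ m ih =>
    rw [Finset.sum_range_succ, ← ih, nodeInc, show (m : ℤ) + 1 + 1 = m + 2 by ring]
    split_ifs with h
    · rcases h with h | h
      · exact jT_step_zero ha hu h0 h1 m h (sol_no_double_zero ha hu h1 m h)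
      · exact le_antisymm (jT_succ_le ha z m) (jT_step_neg ha hu h0 m h)
    · push Not at h
      exact le_antisymm (jT_step_nonneg ha hu h0 m h.1 h.2) (jT_mono ha z m)

/-! ### Prüfer angles at the endpoints -/

/-- Reflecting the interval, `n ↦ m + 1 - n`, does not change the spectrum. -/
lemma evCount_reflect (m : ℕ) (a b : ℤ → ℝ) (Ω : Set ℝ) :
    evCount (jT m (fun n => a (m - n)) (fun n => b (m + 1 - n))) Ω = evCount (jT m a b) Ω := by
  have hsub : jT m (fun n => a (m - n)) (fun n => b (m + 1 - n)) =
      (jT m a b).submatrix Fin.revPerm Fin.revPerm := by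
    ext i j
    simp only [jT, jMatrix, Matrix.submatrix_apply, Fin.revPerm_apply, Fin.val_rev]
    split_ifs <;> first | rfl | omega | (congr 1; omega)
  have hev : ∀ μ, IsEV (jT m (fun n => a (m - n)) (fun n => b (m + 1 - n))) μ ↔
      IsEV (jT m a b) μ := by
    intro μ
    rw [hsub]
    constructor
    · rintro ⟨v, hv, h⟩
      refine ⟨v ∘ Fin.revPerm, fun h0 => hv ?_, ?_⟩
      · ext i; simpa using congrFun h0 (Fin.rev i)
      · rw [Matrix.submatrix_mulVec_equiv] at h
        ext i
        simpa using congrFun h (Fin.rev i)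
    · rintro ⟨v, hv, h⟩
      refine ⟨v ∘ Fin.revPerm, fun h0 => hv ?_, ?_⟩
      · ext i; simpa using congrFun h0 (Fin.rev i)
      · rw [Matrix.submatrix_mulVec_equiv]
        ext i
        have : (v ∘ Fin.revPerm) ∘ Fin.revPerm.symm = v := by ext i; simp
        rw [this, h]; simp
  unfold evCount
  simp only [hev]

/-- Eigenvalue counts from the angle at the right endpoint of the solution vanishing at the left. -/
lemma minus_count {a b u ρ θ : ℤ → ℝ} {z : ℝ} {m : ℕ} (ha : ∀ n, a n < 0)
    (hs : IsJSolution a b z u) (h0 : u 0 = 0) (h1 : u 1 = 1)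
    (hp : IsPrufer a u ρ θ) (hθ : θ 0 = 0) :
    (evCount (jT m a b) (Set.Iio z) : ℤ) = ⌈θ (m + 1 : ℕ) / π⌉ - 1 ∧
    (evCount (jT m a b) (Set.Iic z) : ℤ) = ⌊θ (m + 1 : ℕ) / π⌋ := by
  classical
  have h1' : u 1 ≠ 0 := by rw [h1]; exact one_ne_zero
  have e1 := jT_evCount ha hs.2 h0 h1' m
  have e2 := jT_Iic ha hs.2 h0 h1' m
  have e3 := prufer_ceil_add ha hs.2 hp (m + 1)
  have e4 := prufer_floor hp (m + 1 : ℕ)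
  rw [Finset.sum_range_succ', hθ] at e3
  have e5 : nodeInc u ((0 : ℕ) : ℤ) = 1 := by simp [nodeInc, h0]
  rw [e5] at e3
  push_cast at e1 e2 e3 e4 ⊢
  simp only [zero_div, Int.ceil_zero] at e3
  rw [e4, e3, e2, e1]
  push_cast
  constructor <;> ring

/-- Eigenvalue counts from the angle at the left endpoint of the solution vanishing at the right,
obtained by applying the oscillation theorem to the reflected solution `v`. -/
lemma plus_count {a b u ρ θ : ℤ → ℝ} {z : ℝ} {m : ℕ} (ha : ∀ n, a n < 0)
    (hs : IsJSolution a b z u) (h0 : u (m + 1 : ℕ) = 0) (h1 : u ((m + 1 : ℕ) + 1) = 1)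
    (hp : IsPrufer a u ρ θ) (hθ : θ (m + 1 : ℕ) = 0) :
    (evCount (jT m a b) (Set.Iio z) : ℤ) = - ⌊θ 0 / π⌋ - 1 ∧
    (evCount (jT m a b) (Set.Iic z) : ℤ) = - ⌈θ 0 / π⌉ := by
  classical
  push_cast at h0 h1
  set v : ℤ → ℝ := fun n => u (m + 1 - n) with hv
  have hvs : ∀ n, jTau (fun n => a (m - n)) (fun n => b (m + 1 - n)) v n = z * v n := by
    intro n
    have := hs.2 (m + 1 - n)
    simp only [jTau, hv] at this ⊢
    rw [← this]
    ring_nf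
  have hv0 : v 0 = 0 := by simp [hv, h0]
  have hv1 : v 1 ≠ 0 := by
    simp only [hv, add_sub_cancel_right]
    intro h
    have := hs.2 (m + 1)
    simp only [jTau, h0, h1, add_sub_cancel_right, h] at this
    have := ha (m + 1)
    linarith
  have ha' : ∀ n : ℤ, (fun n : ℤ => a (m - n)) n < 0 := fun n => ha _
  have e1 := jT_evCount ha' hvs hv0 hv1 m
  have e2 := jT_Iic ha' hvs hv0 hv1 m
  rw [evCount_reflect] at e1
  rw [evCount_reflect, evCount_reflect] at e2
  have e3 := prufer_ceil_add ha hs.2 hp (m + 1)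
  have e4 := prufer_floor hp 0
  have hvm : v (m + 1) = u 0 := by simp [hv]
  rw [hvm] at e2
  rw [hθ, zero_div, Int.ceil_zero] at e3
  -- A node is a zero or a sign change; reflection shifts the zeros by one step relative to the
  -- sign changes, which accounts for the correction at `0`.
  let Z : ℕ → ℕ := fun n => if u n = 0 then 1 else 0
  let S : ℕ → ℕ := fun n => if u n * u (n + 1) < 0 then 1 else 0
  have hZS : ∀ n : ℕ, nodeInc u n = Z n + S n := fun n => by
    by_cases h : u n = 0 <;> simp [nodeInc, Z, S, h]
  have hrefl : ∑ n ∈ Finset.range m, nodeInc v (n + 1) =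
      ∑ n ∈ Finset.range m, (Z (n + 1) + S n) := by
    rw [← Finset.sum_range_reflect]
    refine Finset.sum_congr rfl fun n hn => ?_
    have hn' := Finset.mem_range.1 hn
    have c1 : v (((m - 1 - n : ℕ) : ℤ) + 1) = u ((n + 1 : ℕ)) := by
      simp only [hv]; congr 1; omega
    have c2 : v (((m - 1 - n : ℕ) : ℤ) + 1 + 1) = u n := by
      simp only [hv]; congr 1; omega
    simp only [nodeInc, c1, c2, Z, S]
    by_cases h : u ((n + 1 : ℕ)) = 0
    · have h' := h
      push_cast at h'
      simp [h']
    · push_cast at h ⊢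
      simp [h, mul_comm]
  have hsum : ∑ n ∈ Finset.range (m + 1), nodeInc u n =
      ∑ n ∈ Finset.range m, nodeInc v (n + 1) + if u 0 = 0 then 1 else 0 := by
    have hSm : S m = 0 := by simp [S, h0]
    rw [hrefl, Finset.sum_congr rfl fun n _ => hZS n, Finset.sum_add_distrib,
      Finset.sum_add_distrib, Finset.sum_range_succ', Finset.sum_range_succ, hSm]
    simp only [Z, Nat.cast_zero]
    ring
  rw [hsum, ← e1, ← e2] at e3
  rw [e4]
  have e2' : (evCount (jT m a b) (Set.Iic z) : ℤ) =
      evCount (jT m a b) (Set.Iio z) + if u 0 = 0 then 1 else 0 := by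
    rw [e2]; push_cast; rfl
  constructor <;> linarith

/-- Eigenvalue count differences via Prüfer angle differences. -/
theorem stmt_10 (N : ℕ) (hN : 2 ≤ N)
    (a0 b0 a1 b1 : ℤ → ℝ)
    (ha0 : ∀ n : ℤ, a0 n < 0) (ha1 : ∀ n : ℤ, a1 n < 0)
    (lam0 lam1 : ℝ)
    (s0m ρ0m θ0m s0p ρ0p θ0p s1m ρ1m θ1m s1p ρ1p θ1p : ℤ → ℝ)
    (h0m : IsJSolution a0 b0 lam0 s0m) (h0m0 : s0m 0 = 0) (h0m1 : s0m 1 = 1)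
    (hp0m : IsPrufer a0 s0m ρ0m θ0m) (hθ0m : θ0m 0 = 0)
    (h0p : IsJSolution a0 b0 lam0 s0p) (h0pN : s0p (N : ℤ) = 0)
    (h0pN1 : s0p ((N : ℤ) + 1) = 1)
    (hp0p : IsPrufer a0 s0p ρ0p θ0p) (hθ0p : θ0p (N : ℤ) = 0)
    (h1m : IsJSolution a1 b1 lam1 s1m) (h1m0 : s1m 0 = 0) (h1m1 : s1m 1 = 1)
    (hp1m : IsPrufer a1 s1m ρ1m θ1m) (hθ1m : θ1m 0 = 0)
    (h1p : IsJSolution a1 b1 lam1 s1p) (h1pN : s1p (N : ℤ) = 0)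
    (h1pN1 : s1p ((N : ℤ) + 1) = 1)
    (hp1p : IsPrufer a1 s1p ρ1p θ1p) (hθ1p : θ1p (N : ℤ) = 0) :
    -- (i)
    ((evCount (jMatrix N a1 b1) (Set.Iio lam1) : ℤ)
        - (evCount (jMatrix N a0 b0) (Set.Iio lam0) : ℤ)
      = ⌈(θ1m (N : ℤ) - θ0p (N : ℤ)) / π⌉ - ⌈(θ1m 0 - θ0p 0) / π⌉) ∧
    ((evCount (jMatrix N a1 b1) (Set.Iio lam1) : ℤ)
        - (evCount (jMatrix N a0 b0) (Set.Iio lam0) : ℤ)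
      = ⌊(θ1p (N : ℤ) - θ0m (N : ℤ)) / π⌋ - ⌊(θ1p 0 - θ0m 0) / π⌋) ∧
    -- (ii)
    ((evCount (jMatrix N a1 b1) (Set.Iio lam1) : ℤ)
        - (evCount (jMatrix N a0 b0) (Set.Iic lam0) : ℤ)
      = ⌈(θ1m (N : ℤ) - θ0p (N : ℤ)) / π⌉ - ⌊(θ1m 0 - θ0p 0) / π⌋ - 1) ∧
    ((evCount (jMatrix N a1 b1) (Set.Iio lam1) : ℤ)
        - (evCount (jMatrix N a0 b0) (Set.Iic lam0) : ℤ)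
      = ⌈(θ1p (N : ℤ) - θ0m (N : ℤ)) / π⌉ - ⌊(θ1p 0 - θ0m 0) / π⌋ - 1) ∧
    -- (iii)
    ((evCount (jMatrix N a1 b1) (Set.Iic lam1) : ℤ)
        - (evCount (jMatrix N a0 b0) (Set.Iio lam0) : ℤ)
      = ⌊(θ1m (N : ℤ) - θ0p (N : ℤ)) / π⌋ - ⌈(θ1m 0 - θ0p 0) / π⌉ + 1) ∧
    ((evCount (jMatrix N a1 b1) (Set.Iic lam1) : ℤ)
        - (evCount (jMatrix N a0 b0) (Set.Iio lam0) : ℤ)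
      = ⌊(θ1p (N : ℤ) - θ0m (N : ℤ)) / π⌋ - ⌈(θ1p 0 - θ0m 0) / π⌉ + 1) ∧
    -- (iv)
    ((evCount (jMatrix N a1 b1) (Set.Iic lam1) : ℤ)
        - (evCount (jMatrix N a0 b0) (Set.Iic lam0) : ℤ)
      = ⌈(θ1p (N : ℤ) - θ0m (N : ℤ)) / π⌉ - ⌈(θ1p 0 - θ0m 0) / π⌉) ∧
    ((evCount (jMatrix N a1 b1) (Set.Iic lam1) : ℤ)
        - (evCount (jMatrix N a0 b0) (Set.Iic lam0) : ℤ)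
      = ⌊(θ1m (N : ℤ) - θ0p (N : ℤ)) / π⌋ - ⌊(θ1m 0 - θ0p 0) / π⌋) := by
  obtain ⟨m, rfl⟩ : ∃ m, N = m + 1 := ⟨N - 1, by omega⟩
  obtain ⟨A0, A1⟩ := minus_count (m := m) ha0 h0m h0m0 h0m1 hp0m hθ0m
  obtain ⟨B0, B1⟩ := plus_count (m := m) ha0 h0p h0pN h0pN1 hp0p hθ0p
  obtain ⟨C0, C1⟩ := minus_count (m := m) ha1 h1m h1m0 h1m1 hp1m hθ1m
  obtain ⟨D0, D1⟩ := plus_count (m := m) ha1 h1p h1pN h1pN1 hp1p hθ1p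
  rw [hθ0m, hθ0p, hθ1m, hθ1p]
  simp only [sub_zero, zero_sub, neg_div, Int.floor_neg, Int.ceil_neg]
  change (evCount (jMatrix (m + 1) a0 b0) (Set.Iio lam0) : ℤ) = _ at A0 B0
  change (evCount (jMatrix (m + 1) a0 b0) (Set.Iic lam0) : ℤ) = _ at A1 B1
  change (evCount (jMatrix (m + 1) a1 b1) (Set.Iio lam1) : ℤ) = _ at C0 D0
  change (evCount (jMatrix (m + 1) a1 b1) (Set.Iic lam1) : ℤ) = _ at C1 D1
  refine ⟨?_, ?_, ?_, ?_, ?_, ?_, ?_, ?_⟩ <;> linarith
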